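/- Let k be an algebraically closed field of characteristic ≠ 2, let n ≥ 2, and set r = n(n+1)/2 − 1. Suppose A_0, A_1, …, A_r are symmetric n×n matrices over k that form a basis of the k-vector space Symm_n(k) of symmetric n×n matrices, and suppose B_0,…,B_r are symmetric n×n matrices with det(x_0 B_0 + … + x_r B_r) = c · det(x_0 A_0 + … + x_r A_r) as polynomials in x_0,…,x_r for some nonzero c ∈ k. Then there exists an invertible n×n matrix g such that B_i = gᵀ A_i g for every i = 0,…,r. -/

import Mathlib

/-!
Since the `A i` form a basis of the symmetric matrices, `A i ↦ B i` extends to a linear map `T` that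
preserves symmetry and satisfies `det (T X) = c * det X` for symmetric `X`. It remains to show that
such a `T` is a congruence `X ↦ gᵀ X g` (`exists_congr_of_det_eq`).

Every symmetric matrix is congruent to a diagonal one, because `2 ≠ 0`. Testing against suitable
diagonal matrices gives two facts phrased purely in terms of determinants: a symmetric `Z` with
`det (W + Z) = det W` for all symmetric `W` is zero, and a symmetric `Z` with
`det (W + Z) + det (W - Z) = 2 det W` for all symmetric `W` (a weak form of: `det (W + t Z)` is affine
in `t`) has rank at most one, so `Z = w wᵀ` as the field is algebraically closed. The first fact makes
`T` bijective on symmetric matrices. The second, together with the identity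
`det (W + v vᵀ) + det (W - v vᵀ) = 2 det W`, shows that `T` sends each `v vᵀ` to some `w wᵀ`.

Write `T E_ii = w_i w_iᵀ` and let `G` have columns `w_i`. Then `G Gᵀ = T 1` has determinant `c ≠ 0`,
so after composing with the congruence by `G⁻¹` one may assume `T E_ii = E_ii`. The vanishing of the
`2 × 2` minors of `T ((e_i + t e_j)(e_i + t e_j)ᵀ)` forces `T (E_ij + E_ji)` to be a multiple
`s_ij (E_ij + E_ji)` (`map_single_add_single`), and the minors of the images of
`(e_o + e_i)(e_o + e_i)ᵀ` and `(e_o + e_i + e_j)(e_o + e_i + e_j)ᵀ` show `s_ij = d_i d_j` with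
`d_i = s_oi = ±1` (`exists_diagonal_of_map_single`). Hence `T X = D X D` with `D` the diagonal matrix
of the `d_i`.
-/

open Matrix

/-- The generalized characteristic polynomial
`P_A(x_0, …, x_r) = det(x_0 A_0 + … + x_r A_r)` of an `(r+1)`-tuple of `n × n` matrices. -/
noncomputable def genCharPoly {k : Type*} [CommRing k] {n r : ℕ}
    (A : Fin (r + 1) → Matrix (Fin n) (Fin n) k) : MvPolynomial (Fin (r + 1)) k :=
  Matrix.det (∑ i : Fin (r + 1), (MvPolynomial.X i : MvPolynomial (Fin (r + 1)) k) •
    ((A i).map MvPolynomial.C : Matrix (Fin n) (Fin n) (MvPolynomial (Fin (r + 1)) k)))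


section

variable {k : Type*} [Field k] {ι : Type*} [Fintype ι] [DecidableEq ι]

/-! ### Determinants and ranks of symmetric matrices -/

/-- The determinant is affine along a line of rank-one direction, also at singular `W`. The two
summands are determinants of bordered matrices that differ only in their last row. -/
theorem det_add_vecMulVec_add_det_sub (W : Matrix ι ι k) (u v : ι → k) :
    (W + vecMulVec u v).det + (W - vecMulVec u v).det = 2 * W.det := by
  let M : Matrix (ι ⊕ Unit) (ι ⊕ Unit) k :=
    fromBlocks W (-replicateCol Unit u) 0 1
  have key : ∀ x : ι → k, ∀ s : k, M.updateRow (Sum.inr ()) (Sum.elim x fun _ => s) =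
      fromBlocks W (-replicateCol Unit u) (replicateRow Unit x) (of fun _ _ => s) := by
    intro x s
    ext (i | i) (j | j) <;> simp [M, updateRow_apply]
  have h1 : (of fun _ _ => 1 : Matrix Unit Unit k) = 1 := by ext; simp
  have ha : (W + vecMulVec u v).det =
      (M.updateRow (Sum.inr ()) (Sum.elim v fun _ => 1)).det := by
    rw [key, h1, det_fromBlocks_one₂₂, vecMulVec_eq Unit]
    simp
  have hb : (W - vecMulVec u v).det =
      (M.updateRow (Sum.inr ()) (Sum.elim (-v) fun _ => 1)).det := by
    rw [key, h1, det_fromBlocks_one₂₂, vecMulVec_eq Unit]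
    congr 1
    ext; simp [sub_eq_add_neg, mul_apply]
  have hs : (Sum.elim v (fun _ => 1) + Sum.elim (-v) (fun _ => 1) : ι ⊕ Unit → k) =
      Sum.elim (0 : ι → k) (fun _ => (2 : k)) := by
    ext (i | i) <;> simp [one_add_one_eq_two]
  rw [ha, hb, ← det_updateRow_add, hs, key]
  have h0 : replicateRow Unit (0 : ι → k) = (0 : Matrix Unit ι k) := by ext; simp
  rw [h0, det_fromBlocks_zero₂₁]
  simp [mul_comm]

/-- A symmetric matrix is congruent to a diagonal one in characteristic not two. -/
theorem exists_eq_mul_diagonal_mul_transpose (h2 : (2 : k) ≠ 0) {Z : Matrix ι ι k}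
    (hZ : Z.IsSymm) :
    ∃ (P : Matrix ι ι k) (d : ι → k), IsUnit P.det ∧ Z = P * diagonal d * Pᵀ := by
  have := invertibleOfNonzero h2
  have hs : LinearMap.IsSymm (Matrix.toBilin' Z) := by
    constructor
    intro x y
    simp only [Matrix.toBilin'_apply', RingHom.id_apply]
    rw [dotProduct_comm, dotProduct_mulVec, ← mulVec_transpose, hZ.eq]
  obtain ⟨v, hv⟩ := LinearMap.BilinForm.exists_orthogonal_basis (B := Matrix.toBilin' Z) hs
  let e : Fin (Module.finrank k (ι → k)) ≃ ι := Fintype.equivOfCardEq (by simp)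
  let b := v.reindex e
  have hb : ∀ i j, i ≠ j → b i ⬝ᵥ (Z *ᵥ b j) = 0 := by
    intro i j hij
    have := hv (i := e.symm i) (j := e.symm j) (by simpa using hij)
    simpa [Function.onFun, Matrix.toBilin'_apply', b] using this
  let Q : Matrix ι ι k := of fun i => b i
  have hQ : IsUnit Q.det := by
    have := (Pi.basisFun k ι).isUnit_det b
    rw [Module.Basis.det_apply] at this
    have h' : (Pi.basisFun k ι).toMatrix b = Qᵀ := by
      ext i j; simp [Q, Module.Basis.toMatrix_apply]
    rwa [h', det_transpose] at this
  have hD : Q * Z * Qᵀ = diagonal fun i => b i ⬝ᵥ (Z *ᵥ b i) := by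
    have : ∀ i j, (Q * Z * Qᵀ) i j = b i ⬝ᵥ (Z *ᵥ b j) := by
      intro i j
      rw [Matrix.mul_assoc]
      rfl
    ext i j
    rw [this, diagonal_apply]
    split_ifs with hij
    · rw [hij]
    · exact hb i j hij
  refine ⟨Q⁻¹, fun i => b i ⬝ᵥ (Z *ᵥ b i), by simpa using hQ, ?_⟩
  rw [← hD, transpose_nonsing_inv, Matrix.mul_assoc Q Z, ← Matrix.mul_assoc Q⁻¹,
    nonsing_inv_mul _ hQ, Matrix.one_mul, Matrix.mul_assoc, mul_nonsing_inv _ (by simpa using hQ),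
    Matrix.mul_one]

theorem isSymm_mul_diagonal_mul_transpose (P : Matrix ι ι k) (d : ι → k) :
    (P * diagonal d * Pᵀ).IsSymm := by
  simp [Matrix.IsSymm, Matrix.mul_assoc]

theorem det_mul_diagonal_mul_transpose (P : Matrix ι ι k) (d : ι → k) :
    (P * diagonal d * Pᵀ).det = P.det ^ 2 * ∏ i, d i := by
  simp; ring

/-- The radical of the determinant on symmetric matrices is trivial; this gives injectivity of
determinant preservers. -/
theorem eq_zero_of_det_add (h2 : (2 : k) ≠ 0) {Z : Matrix ι ι k} (hZ : Z.IsSymm)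
    (h : ∀ W : Matrix ι ι k, W.IsSymm → (W + Z).det = W.det) : Z = 0 := by
  obtain ⟨P, d, hP, rfl⟩ := exists_eq_mul_diagonal_mul_transpose h2 hZ
  suffices hd : d = 0 by simp [hd]
  ext i
  by_contra hi
  simp only [Pi.zero_apply] at hi
  -- With this `W`, the diagonal of `W + Z` is `d i` at `i` and `1` elsewhere, while `W` is singular.
  have := h _ (isSymm_mul_diagonal_mul_transpose P (fun l => if l = i then 0 else 1 - d l))
  rw [← Matrix.add_mul, ← Matrix.mul_add, diagonal_add, det_mul_diagonal_mul_transpose,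
    det_mul_diagonal_mul_transpose] at this
  rw [Finset.prod_eq_zero (f := fun l => if l = i then 0 else 1 - d l) (Finset.mem_univ i)
    (by simp), mul_zero] at this
  refine mul_ne_zero (pow_ne_zero 2 hP.ne_zero) (Finset.prod_ne_zero_iff.2 ?_) this
  intro l _
  split_ifs with hl <;> simp [hl, hi]

/-- Symmetric matrices of rank at most one, characterized through determinants: if `Z` had two nonzero
diagonal coefficients, some `W` would make `W` and `W + Z` singular but `W - Z` invertible. -/
theorem exists_eq_vecMulVec_of_det_add_add_det_sub [IsAlgClosed k] (h2 : (2 : k) ≠ 0)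
    {Z : Matrix ι ι k} (hZ : Z.IsSymm)
    (h : ∀ W : Matrix ι ι k, W.IsSymm → (W + Z).det + (W - Z).det = 2 * W.det) :
    ∃ w, Z = vecMulVec w w := by
  obtain ⟨P, d, hP, rfl⟩ := exists_eq_mul_diagonal_mul_transpose h2 hZ
  have hd : ∀ i j, i ≠ j → d i ≠ 0 → d j = 0 := by
    intro i j hij hi
    by_contra hj
    -- `W` vanishes at `i`, `W + Z` vanishes at `j`, and `W - Z` is `1` away from `i` and `j`.
    have := h _ (isSymm_mul_diagonal_mul_transpose P
      (fun l => if l = i then 0 else if l = j then - d j else 1 + d l))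
    rw [← Matrix.add_mul, ← Matrix.mul_add, diagonal_add, ← Matrix.sub_mul, ← Matrix.mul_sub,
      diagonal_sub, det_mul_diagonal_mul_transpose, det_mul_diagonal_mul_transpose,
      det_mul_diagonal_mul_transpose] at this
    rw [Finset.prod_eq_zero (Finset.mem_univ j) (by simp [hij.symm]),
      Finset.prod_eq_zero
        (f := fun l => if l = i then 0 else if l = j then - d j else 1 + d l)
        (Finset.mem_univ i) (by simp), mul_zero, mul_zero, zero_add] at this
    refine mul_ne_zero (pow_ne_zero 2 hP.ne_zero) (Finset.prod_ne_zero_iff.2 ?_) this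
    intro l _
    split_ifs with hl hl'
    · simp [hl, hi]
    · subst hl'
      have : - d l - d l = - (2 * d l) := by ring
      rw [this]
      exact neg_ne_zero.2 (mul_ne_zero h2 hj)
    · simp
  by_cases hz : ∃ i, d i ≠ 0
  · obtain ⟨i, hi⟩ := hz
    obtain ⟨s, hs⟩ := IsAlgClosed.exists_pow_nat_eq (d i) (n := 2) (by norm_num)
    have hdi : diagonal d = vecMulVec (Pi.single i s) (Pi.single i s) := by
      ext a b
      rw [vecMulVec_apply, diagonal_apply]
      by_cases ha : a = i
      · subst ha
        by_cases hb : a = b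
        · subst hb; simp [← hs, sq]
        · simp [hb, Ne.symm hb]
      · simp [ha, hd i a (Ne.symm ha) hi]
    refine ⟨P *ᵥ Pi.single i s, ?_⟩
    rw [hdi, mul_vecMulVec, vecMulVec_mul, vecMul_transpose]
  · push Not at hz
    exact ⟨0, by simp [show d = 0 from funext hz]⟩

/-! ### Normalized rank-one preservers -/

/-- A map preserving the matrices `v vᵀ` and fixing each `E_ii` scales each `E_ij + E_ji`: the image
of `(e_i + t e_j)(e_i + t e_j)ᵀ` is `E_ii + t S + t² E_jj` with `S` the image of `E_ij + E_ji`, and the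
vanishing of its `2 × 2` minors determines `S` up to a scalar. -/
theorem map_single_add_single (T : Matrix ι ι k →ₗ[k] Matrix ι ι k) (h2 : (2 : k) ≠ 0)
    [IsAlgClosed k] (hrank : ∀ v, ∃ w, T (vecMulVec v v) = vecMulVec w w)
    (hE : ∀ i, T (single i i 1) = single i i 1) {i j : ι} (hij : i ≠ j) :
    ∃ s : k, T (single i j 1 + single j i 1) = s • (single i j 1 + single j i 1) := by
  set S := T (single i j 1 + single j i 1) with hS
  have hT : ∀ t : k, ∃ w, single i i 1 + t • S + t ^ 2 • single j j 1 = vecMulVec w w := by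
    intro t
    obtain ⟨w, hw⟩ := hrank (Pi.single i 1 + t • Pi.single j 1)
    refine ⟨w, ?_⟩
    rw [← hw, hS, ← hE i, ← hE j, ← map_smul, ← map_smul, ← map_add, ← map_add]
    congr 1
    simp only [single_eq_single_vecMulVec_single, add_vecMulVec, vecMulVec_add, smul_vecMulVec,
      vecMulVec_smul, smul_add, smul_smul, sq]
    abel
  have minor : ∀ (t : k) a b c d,
      (single i i 1 + t • S + t ^ 2 • single j j 1 : Matrix ι ι k) a b *
        (single i i 1 + t • S + t ^ 2 • single j j 1 : Matrix ι ι k) c d =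
      (single i i 1 + t • S + t ^ 2 • single j j 1 : Matrix ι ι k) a d *
        (single i i 1 + t • S + t ^ 2 • single j j 1 : Matrix ι ι k) c b := by
    intro t a b c d
    obtain ⟨w, hw⟩ := hT t
    rw [hw]
    simp only [vecMulVec_apply]
    ring
  have hsymm : ∀ a b, S a b = S b a := by
    intro a b
    obtain ⟨w, hw⟩ := hT 1
    have h1 := congrFun (congrFun hw a) b
    have h2 := congrFun (congrFun hw b) a
    rw [vecMulVec_apply] at h1 h2
    simp [single_apply] at h1 h2
    grind
  have hpq0 : ∀ p q, p ≠ i → p ≠ j → q ≠ i → q ≠ j → S p q = 0 := by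
    intro p q hpi hpj hqi hqj
    have h1 := minor 1 i i p q
    have h2 := minor (-1) i i p q
    simp [hpi.symm, hpj.symm, hqi.symm, hqj.symm, hij.symm] at h1 h2
    have : 2 * S p q = 0 := by linear_combination h1 - h2
    grind
  have hip : ∀ p, p ≠ i → p ≠ j → S i p = 0 := by
    intro p hpi hpj
    have h1 := minor 1 i i p p
    simp [hpi.symm, hpj.symm, hij.symm, hpq0 p p hpi hpj hpi hpj, hsymm p i] at h1
    exact h1
  have hjp : ∀ p, p ≠ i → p ≠ j → S j p = 0 := by
    intro p hpi hpj
    have h1 := minor 1 j j p p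
    simp [hpi.symm, hpj.symm, hij, hpq0 p p hpi hpj hpi hpj, hsymm p j] at h1
    exact h1
  have hdiag : ∀ t : k, (1 + t * S i i) * (t * S j j + t ^ 2) = t ^ 2 * S i j ^ 2 := by
    intro t
    have h1 := minor t i i j j
    simp [hij, hij.symm, hsymm j i] at h1
    linear_combination h1
  have hjj : S j j = 0 := by
    -- The values `t = ±1` do not separate `S i i` from `-S j j`; a square root of `-1` does.
    obtain ⟨t, ht⟩ := IsAlgClosed.exists_pow_nat_eq (-1 : k) (n := 2) (by norm_num)
    have h1 := hdiag 1
    have h2' := hdiag (-1)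
    have h3 := hdiag t
    have ht0 : t ≠ 0 := by rintro rfl; simp at ht
    have h4 : 2 * (S i i + S j j) = 0 := by linear_combination h1 - h2'
    have h5 : S i i + S j j = 0 := (mul_eq_zero.1 h4).resolve_left h2
    have h6 : 2 * 2 * t * S j j = 0 := by
      linear_combination 2 * h3 - t ^ 2 * (h1 + h2') - 2 * t ^ 3 * h5 + 2 * t * S j j * ht
    simpa [h2, ht0] using h6
  have hii : S i i = 0 := by
    have h1 := hdiag 1
    have h2' := hdiag (-1)
    have h4 : 2 * (S i i + S j j) = 0 := by linear_combination h1 - h2'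
    simpa [h2, hjj] using h4
  refine ⟨S i j, ?_⟩
  ext a b
  simp only [Matrix.smul_apply, Matrix.add_apply, single_apply, smul_eq_mul]
  by_cases hai : a = i
  · subst hai
    by_cases hbi : b = a
    · subst hbi; simp [hii, hij.symm]
    · by_cases hbj : b = j
      · subst hbj; simp [hij.symm]
      · simp [hip b hbi hbj, Ne.symm hbj, hij.symm]
  · by_cases haj : a = j
    · subst haj
      by_cases hbi : b = i
      · subst hbi; simp [hsymm a b, hij]
      · by_cases hbj : b = a
        · subst hbj; simp [hjj, hij]
        · simp [hjp b hbi hbj, Ne.symm hbi, hij]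
    · by_cases hbi : b = i
      · subst hbi; simp [hsymm a b, hip a hai haj, Ne.symm hai, Ne.symm haj]
      · by_cases hbj : b = j
        · subst hbj; simp [hsymm a b, hjp a hai haj, Ne.symm hai, Ne.symm haj]
        · simp [hpq0 a b hai haj hbi hbj, Ne.symm hai, Ne.symm haj]

/-- A map preserving the matrices `v vᵀ` and fixing each `E_ii` is, on symmetric matrices, a congruence
by a diagonal matrix (whose entries are signs). -/
theorem exists_diagonal_of_map_single (T : Matrix ι ι k →ₗ[k] Matrix ι ι k) (h2 : (2 : k) ≠ 0)
    [IsAlgClosed k] [Nonempty ι]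
    (hrank : ∀ v, ∃ w, T (vecMulVec v v) = vecMulVec w w)
    (hE : ∀ i, T (single i i 1) = single i i 1) :
    ∃ d : ι → k, ∀ X : Matrix ι ι k, X.IsSymm → T X = diagonal d * X * diagonal d := by
  have hs : ∀ i j, ∃ s : k, i ≠ j →
      T (single i j 1 + single j i 1) = s • (single i j 1 + single j i 1) := by
    intro i j
    by_cases hij : i = j
    · exact ⟨0, fun h => (h hij).elim⟩
    · obtain ⟨s, hs⟩ := map_single_add_single T h2 hrank hE hij
      exact ⟨s, fun _ => hs⟩
  choose s hs using hs
  obtain ⟨o⟩ := ‹Nonempty ι›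
  let d : ι → k := fun i => if i = o then 1 else s o i
  have hdo : d o = 1 := by simp [d]
  have hd : ∀ i, i ≠ o → T (single o i 1 + single i o 1) =
      d i • (single o i 1 + single i o 1) := by
    intro i hi
    rw [hs o i hi.symm]; simp [d, hi]
  have hd2 : ∀ i, d i * d i = 1 := by
    intro i
    by_cases hi : i = o
    · simp [hi, hdo]
    · obtain ⟨w, hw⟩ := hrank (Pi.single o 1 + Pi.single i 1)
      have e : vecMulVec (Pi.single o 1 + Pi.single i 1) (Pi.single o 1 + Pi.single i 1) =
          single o o (1 : k) + single i i 1 + (single o i 1 + single i o 1) := by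
        simp only [single_eq_single_vecMulVec_single, add_vecMulVec, vecMulVec_add]
        abel
      rw [e, map_add, map_add, hE, hE, hd i hi] at hw
      have h1 := congrFun (congrFun hw o) o
      have h2 := congrFun (congrFun hw o) i
      have h3 := congrFun (congrFun hw i) i
      simp [hi, Ne.symm hi, vecMulVec_apply] at h1 h2 h3
      grind
  have hF : ∀ i j, T (single i j 1 + single j i 1) =
      (d i * d j) • (single i j 1 + single j i 1) := by
    intro i j
    by_cases hij : i = j
    · subst hij; simp [hE, hd2]
    by_cases hi : i = o
    · subst hi; rw [hd j (Ne.symm hij), hdo, one_mul]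
    by_cases hj : j = o
    · subst hj; rw [add_comm, hd i hij, hdo, mul_one]
    obtain ⟨w, hw⟩ := hrank (Pi.single o 1 + Pi.single i 1 + Pi.single j 1)
    have e : vecMulVec (Pi.single o 1 + Pi.single i 1 + Pi.single j 1)
        (Pi.single o 1 + Pi.single i 1 + Pi.single j 1) =
        single o o (1 : k) + single i i 1 + single j j 1 + (single o i 1 + single i o 1)
          + (single o j 1 + single j o 1) + (single i j 1 + single j i 1) := by
      simp only [single_eq_single_vecMulVec_single, add_vecMulVec, vecMulVec_add]
      abel
    rw [e, map_add, map_add, map_add, map_add, map_add, hE, hE, hE, hd i hi, hd j hj,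
      hs i j hij] at hw
    rw [hs i j hij]
    congr 1
    have h1 := congrFun (congrFun hw o) o
    have h2 := congrFun (congrFun hw o) i
    have h3 := congrFun (congrFun hw o) j
    have h4 := congrFun (congrFun hw i) j
    simp [hi, Ne.symm hi, hj, Ne.symm hj, hij, Ne.symm hij, vecMulVec_apply]
      at h1 h2 h3 h4
    rw [h2, h3, h4]
    linear_combination (w i * w j) * h1
  refine ⟨d, fun X hX => ?_⟩
  -- Composed with the symmetrization `Y ↦ Y + Yᵀ`, the two maps agree on elementary matrices; on a
  -- symmetric `X` the symmetrization is `2 • X`.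
  let σ : Matrix ι ι k →ₗ[k] Matrix ι ι k :=
    LinearMap.id + (transposeLinearEquiv ι ι k k).toLinearMap
  have hσ : ∀ Y, σ Y = Y + Yᵀ := fun _ => rfl
  let δ : Matrix ι ι k →ₗ[k] Matrix ι ι k :=
    LinearMap.mulRight k (diagonal d) ∘ₗ LinearMap.mulLeft k (diagonal d)
  have hδ : ∀ Y, δ Y = diagonal d * Y * diagonal d := fun _ => rfl
  have key : T ∘ₗ σ = δ ∘ₗ σ := by
    apply Matrix.ext_linearMap k
    intro i j
    ext1
    simp only [LinearMap.comp_apply, singleLinearMap_apply, hσ, hδ, transpose_single, hF]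
    ext a b
    simp only [Matrix.smul_apply, Matrix.add_apply, diagonal_mul, mul_diagonal, single_apply,
      smul_eq_mul]
    clear_value d
    grind
  have h := LinearMap.congr_fun key X
  rw [LinearMap.comp_apply, LinearMap.comp_apply, hσ, hX.eq, ← two_smul k X, map_smul,
    map_smul, hδ] at h
  exact smul_right_injective _ h2 h

/-! ### Determinant preservers and the generalized characteristic polynomial -/

/-- A linear map that preserves the symmetric matrices and scales their determinant by a nonzero
constant is a congruence on them. -/
theorem exists_congr_of_det_eq [IsAlgClosed k] [Nonempty ι] (h2 : (2 : k) ≠ 0)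
    (T : Matrix ι ι k →ₗ[k] Matrix ι ι k) (hsymm : ∀ X : Matrix ι ι k, X.IsSymm → (T X).IsSymm)
    {c : k} (hc : c ≠ 0) (hdet : ∀ X : Matrix ι ι k, X.IsSymm → (T X).det = c * X.det) :
    ∃ g : Matrix ι ι k, IsUnit g ∧ ∀ X : Matrix ι ι k, X.IsSymm → T X = gᵀ * X * g := by
  let S : Submodule k (Matrix ι ι k) :=
    { carrier := {X | X.IsSymm}
      add_mem' := fun ha hb => ha.add hb
      zero_mem' := isSymm_zero
      smul_mem' := fun a _ hx => hx.smul a }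
  let TS : S →ₗ[k] S := T.restrict hsymm
  have hinj : Function.Injective TS := by
    rw [injective_iff_map_eq_zero]
    rintro ⟨Z, hZ⟩ h0
    have h0' : T Z = 0 := congrArg Subtype.val h0
    refine Subtype.ext (eq_zero_of_det_add h2 hZ fun W hW => ?_)
    apply mul_left_cancel₀ hc
    rw [← hdet _ (hW.add hZ), ← hdet _ hW, map_add, h0', add_zero]
  have hsurj : ∀ Y : Matrix ι ι k, Y.IsSymm → ∃ X : Matrix ι ι k, X.IsSymm ∧ T X = Y := by
    intro Y hY
    obtain ⟨X, hX⟩ := LinearMap.injective_iff_surjective.1 hinj ⟨Y, hY⟩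
    exact ⟨X, X.2, congrArg Subtype.val hX⟩
  have hvv : ∀ v : ι → k, (vecMulVec v v).IsSymm := fun v => transpose_vecMulVec v v
  have hrank : ∀ v, ∃ w, T (vecMulVec v v) = vecMulVec w w := by
    intro v
    apply exists_eq_vecMulVec_of_det_add_add_det_sub h2 (hsymm _ (hvv v))
    intro W hW
    obtain ⟨X, hX, rfl⟩ := hsurj W hW
    rw [← map_add, ← map_sub, hdet _ (hX.add (hvv v)), hdet _ (hX.sub (hvv v)), hdet _ hX,
      ← mul_add, det_add_vecMulVec_add_det_sub]
    ring
  choose w hw using hrank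
  -- The columns `w_i` of `G` satisfy `T E_ii = w_i w_iᵀ`.
  let G : Matrix ι ι k := of fun a i => w (Pi.single i 1) a
  have hGG : T 1 = G * Gᵀ := by
    rw [← diagonal_one, ← sum_single_eq_diagonal, map_sum]
    simp_rw [single_eq_single_vecMulVec_single, hw]
    ext a b
    simp [Matrix.sum_apply, vecMulVec_apply, mul_apply, G]
  have hG : IsUnit G.det := by
    have h1 := hdet 1 isSymm_one
    rw [hGG, det_mul, det_one, mul_one] at h1
    rw [isUnit_iff_ne_zero]
    rintro h0
    rw [h0, zero_mul] at h1
    exact hc h1.symm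
  have hGt : IsUnit Gᵀ.det := by rwa [det_transpose]
  let T' : Matrix ι ι k →ₗ[k] Matrix ι ι k :=
    (LinearMap.mulLeft k G⁻¹ ∘ₗ LinearMap.mulRight k (G⁻¹)ᵀ) ∘ₗ T
  have hT' : ∀ X, T' X = G⁻¹ * (T X * (G⁻¹)ᵀ) := fun X => rfl
  have hvec : ∀ v, T' (vecMulVec v v) = vecMulVec (G⁻¹ *ᵥ w v) (G⁻¹ *ᵥ w v) := by
    intro v
    rw [hT', hw, vecMulVec_mul, mul_vecMulVec, vecMul_transpose]
  obtain ⟨d, hd⟩ := exists_diagonal_of_map_single T' h2 (fun v => ⟨_, hvec v⟩) (by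
    intro i
    have : G⁻¹ *ᵥ w (Pi.single i 1) = Pi.single i 1 := by
      have h1 : w (Pi.single i 1) = G *ᵥ Pi.single i 1 := by
        ext a; simp [G]
      rw [h1, mulVec_mulVec, nonsing_inv_mul _ hG, one_mulVec]
    rw [single_eq_single_vecMulVec_single, hvec, this])
  have hform : ∀ X : Matrix ι ι k, X.IsSymm →
      T X = (diagonal d * Gᵀ)ᵀ * X * (diagonal d * Gᵀ) := by
    intro X hX
    have h1 : T X = G * T' X * Gᵀ := by
      rw [hT', mul_nonsing_inv_cancel_left _ _ hG, transpose_nonsing_inv,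
        nonsing_inv_mul_cancel_right _ _ hGt]
    rw [h1, hd X hX]
    simp [Matrix.mul_assoc]
  refine ⟨diagonal d * Gᵀ, ?_, hform⟩
  rw [isUnit_iff_isUnit_det, isUnit_iff_ne_zero]
  intro h0
  have h1 := hdet 1 isSymm_one
  rw [hform 1 isSymm_one, det_mul, h0, mul_zero, det_one, mul_one] at h1
  exact hc h1.symm

theorem eval_genCharPoly {n r : ℕ} (A : Fin (r + 1) → Matrix (Fin n) (Fin n) k)
    (x : Fin (r + 1) → k) :
    MvPolynomial.eval x (genCharPoly A) = (∑ i, x i • A i).det := by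
  rw [genCharPoly, RingHom.map_det]
  congr 1
  ext a b
  simp [Matrix.sum_apply]

end

/-- **Base case of Proposition 5.1.** Let `r = n(n+1)/2 − 1` (encoded by
`2(r+1) = n(n+1)`), and let `A₀, …, A_r` be symmetric `n × n` matrices forming a basis of
`Symm_n(k)` (linearly independent and spanning the symmetric matrices). If `B₀, …, B_r` are
symmetric matrices with `P_B = c · P_A` for some nonzero scalar `c`, then `B` is equivalent
to `A`: there is an invertible `g` with `Bᵢ = gᵀ Aᵢ g` for all `i`. -/
theorem equiv_of_genCharPoly_smul_eq_of_basis
    (k : Type*) [Field k] [IsAlgClosed k] (hk : ringChar k ≠ 2)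
    (n r : ℕ) (hn : 2 ≤ n) (hr : 2 * (r + 1) = n * (n + 1))
    (A B : Fin (r + 1) → Matrix (Fin n) (Fin n) k)
    (hA : ∀ i, (A i).IsSymm) (hB : ∀ i, (B i).IsSymm)
    (hind : LinearIndependent k A)
    (hspan : ∀ X : Matrix (Fin n) (Fin n) k, X.IsSymm → X ∈ Submodule.span k (Set.range A))
    (c : k) (hc : c ≠ 0) (h : genCharPoly B = c • genCharPoly A) :
    ∃ g : Matrix (Fin n) (Fin n) k, IsUnit g ∧ ∀ i, B i = gᵀ * A i * g := by
  have h2 : (2 : k) ≠ 0 := Ring.two_ne_zero hk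
  have : Nonempty (Fin n) := ⟨⟨0, by omega⟩⟩
  obtain ⟨T, hT⟩ := LinearMap.exists_extend ((Module.Basis.span hind).constr k B)
  have hTA : ∀ i, T (A i) = B i := by
    intro i
    have := LinearMap.congr_fun hT (Module.Basis.span hind i)
    rw [Module.Basis.constr_basis, LinearMap.comp_apply, Submodule.subtype_apply,
      Module.Basis.span_apply] at this
    exact this
  have hsum : ∀ X : Matrix (Fin n) (Fin n) k, X.IsSymm →
      ∃ x : Fin (r + 1) → k, X = ∑ i, x i • A i ∧ T X = ∑ i, x i • B i := by
    intro X hX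
    obtain ⟨x, rfl⟩ := (Submodule.mem_span_range_iff_exists_fun k).1 (hspan X hX)
    exact ⟨x, rfl, by simp [map_sum, hTA]⟩
  obtain ⟨g, hg, hgT⟩ := exists_congr_of_det_eq h2 T
    (by
      intro X hX
      obtain ⟨x, -, hx⟩ := hsum X hX
      rw [hx, Matrix.IsSymm, transpose_sum]
      exact Finset.sum_congr rfl fun i _ => by rw [transpose_smul, (hB i).eq]) hc
    (by
      intro X hX
      obtain ⟨x, hx, hTx⟩ := hsum X hX
      rw [hTx, hx, ← eval_genCharPoly, ← eval_genCharPoly, h, MvPolynomial.smul_eval])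
  exact ⟨g, hg, fun i => by rw [← hTA, hgT _ (hA i)]⟩
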